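/- Let (X, Σ, μ) be non-atomic and T = EM_u : L^p(Σ) → L^p(𝒜) bounded, 1 < p < ∞. If T has closed range and the cokernel of T is finite dimensional (i.e., codim of the range in L^p(𝒜) is finite), then T is surjective. -/

import Mathlib

/-!
The range `R` of `T` is a closed subspace of `L^p(𝒜)` which, by the pull-out property of the
conditional expectation, is stable under multiplication by indicators of sets of `𝒜`.  The theorem
is therefore an instance of a fact about such subspaces over a non-atomic measure
(`eq_top_of_indicator_invariant`): if `R` has finite codimension then it is everything.

Suppose `g ∉ R` and consider the sets `S` with `1_S g ∈ R`.  They form an ideal of measurable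
sets which is stable under countable unions because `R` is closed, so it has a largest member `M`
up to null sets (`exists_maximal_mem`).  No subset of positive measure of `Mᶜ` belongs to the ideal,
and `Mᶜ` is not null since `g ∉ R`.  Non-atomicity splits `Mᶜ` into infinitely many disjoint
pieces `S i` of positive measure, and the classes of `1_{S i} g` modulo `R` are linearly
independent: multiplying a relation `∑ i, c i • 1_{S i} g ∈ R` by `1_{S j}` gives
`c j • 1_{S j} g ∈ R`.  This contradicts finite codimension.
-/

open MeasureTheory Filter
open scoped NNReal ENNReal

/-- `μ` is non-atomic relative to the σ-algebra `m`. -/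
def NonAtomicWrt {X : Type*} {mX : MeasurableSpace X} (m : MeasurableSpace X)
    (μ : @MeasureTheory.Measure X mX) : Prop :=
  ∀ F : Set X, MeasurableSet[m] F → 0 < μ F →
    ∃ G : Set X, MeasurableSet[m] G ∧ G ⊆ F ∧ 0 < μ G ∧ μ G < μ F

section IndicatorInvariant

variable {X : Type*} {m : MeasurableSpace X} {ν : Measure X} {p : ℝ≥0∞}

/-- Multiplication by the indicator of a measurable set, as a linear map of `L^p`. -/
noncomputable def indLp {S : Set X} (hS : MeasurableSet S) : Lp ℝ p ν →ₗ[ℝ] Lp ℝ p ν where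
  toFun g := ((Lp.memLp g).indicator hS).toLp _
  map_add' f g := by
    rw [← MemLp.toLp_add]
    refine MemLp.toLp_congr _ _ ?_
    filter_upwards [Lp.coeFn_add f g] with x hx
    rw [← Set.indicator_add']
    by_cases h : x ∈ S
    · rw [Set.indicator_of_mem h, Set.indicator_of_mem h, hx]
    · rw [Set.indicator_of_notMem h, Set.indicator_of_notMem h]
  map_smul' c g := by
    rw [RingHom.id_apply, ← MemLp.toLp_const_smul]
    refine MemLp.toLp_congr _ _ ?_
    filter_upwards [Lp.coeFn_smul c g] with x hx
    rw [Pi.smul_apply]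
    by_cases h : x ∈ S
    · rw [Set.indicator_of_mem h, Set.indicator_of_mem h, hx, Pi.smul_apply]
    · rw [Set.indicator_of_notMem h, Set.indicator_of_notMem h, smul_zero]

lemma coeFn_indLp {S : Set X} (hS : MeasurableSet S) (g : Lp ℝ p ν) :
    (indLp hS g : X → ℝ) =ᵐ[ν] S.indicator g := by
  have h : indLp hS g = ((Lp.memLp g).indicator hS).toLp _ := rfl
  rw [h]
  exact MemLp.coeFn_toLp _

lemma indLp_indLp {S S' : Set X} (hS : MeasurableSet S) (hS' : MeasurableSet S')
    (g : Lp ℝ p ν) : indLp hS (indLp hS' g) = indLp (hS.inter hS') g := by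
  apply Lp.ext
  filter_upwards [coeFn_indLp hS (indLp hS' g), coeFn_indLp hS' g, coeFn_indLp (hS.inter hS') g]
    with x h1 h2 h3
  rw [h1, h3, ← Set.indicator_indicator]
  by_cases h : x ∈ S <;> simp [h, h2]

lemma indLp_eq_zero_of_null {S : Set X} (hS : MeasurableSet S) (h0 : ν S = 0)
    (g : Lp ℝ p ν) : indLp hS g = 0 := by
  apply Lp.ext
  filter_upwards [coeFn_indLp hS g, Lp.coeFn_zero ℝ p ν, measure_eq_zero_iff_ae_notMem.1 h0]
    with x h1 h2 h3
  rw [h1, h2, Set.indicator_of_notMem h3, Pi.zero_apply]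

lemma indLp_univ (g : Lp ℝ p ν) : indLp MeasurableSet.univ g = g := by
  apply Lp.ext
  filter_upwards [coeFn_indLp MeasurableSet.univ g] with x h1
  rw [h1, Set.indicator_univ]

lemma indLp_add_of_disjoint {S S' : Set X} (hS : MeasurableSet S) (hS' : MeasurableSet S')
    (hd : Disjoint S S') (g : Lp ℝ p ν) :
    indLp hS g + indLp hS' g = indLp (hS.union hS') g := by
  apply Lp.ext
  filter_upwards [Lp.coeFn_add (indLp hS g) (indLp hS' g), coeFn_indLp hS g, coeFn_indLp hS' g,
    coeFn_indLp (hS.union hS') g] with x h1 h2 h3 h4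
  rw [h1, h4, Set.indicator_union_of_disjoint hd, Pi.add_apply, h2, h3]

/-- The norms of `1_S g` are controlled by the finite measure with density `|g|^p`, which gives
continuity from below of `S ↦ 1_S g`; here `p < ∞` is essential. -/
lemma tendsto_indLp_iUnion [hp : Fact (1 ≤ p)] (hp2 : p ≠ ∞) (s : ℕ → Set X)
    (hs : ∀ n, MeasurableSet (s n)) (hmono : Monotone s) (g : Lp ℝ p ν) :
    Tendsto (fun n => indLp (hs n) g) atTop (nhds (indLp (MeasurableSet.iUnion hs) g)) := by
  have hp0 : p ≠ 0 := (zero_lt_one.trans_le hp.out).ne'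
  have hpr : 0 < p.toReal := ENNReal.toReal_pos hp0 hp2
  set κ : Measure X := ν.withDensity (fun x => ‖g x‖ₑ ^ p.toReal) with hκ
  have hfin : ∫⁻ x, ‖g x‖ₑ ^ p.toReal ∂ν ≠ ∞ :=
    (lintegral_rpow_enorm_lt_top_of_eLpNorm_lt_top hp0 hp2 (Lp.eLpNorm_lt_top g)).ne
  have : IsFiniteMeasure κ := isFiniteMeasure_withDensity hfin
  set d : ℕ → Set X := fun n => (⋃ k, s k) \ s n with hd
  have hdm : ∀ n, MeasurableSet (d n) := fun n => (MeasurableSet.iUnion hs).diff (hs n)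
  have hκd : Tendsto (fun n => κ (d n)) atTop (nhds 0) := by
    have hanti : Antitone d := fun a b hab => Set.sdiff_subset_sdiff_right (hmono hab)
    have h := tendsto_measure_iInter_atTop (μ := κ) (s := d)
      (fun n => (hdm n).nullMeasurableSet) hanti ⟨0, measure_ne_top _ _⟩
    have he : ⋂ n, d n = ∅ := by
      ext x
      simp only [hd, Set.mem_iInter, Set.mem_sdiff, Set.mem_iUnion, Set.mem_empty_iff_false,
        iff_false]
      intro h
      obtain ⟨k, hk⟩ := (h 0).1
      exact (h k).2 hk
    rwa [he, measure_empty] at h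
  rw [Lp.tendsto_Lp_iff_tendsto_eLpNorm']
  have key : ∀ n, eLpNorm (⇑(indLp (hs n) g) - ⇑(indLp (MeasurableSet.iUnion hs) g)) p ν
      = κ (d n) ^ (1 / p.toReal) := by
    intro n
    have h1 : (⇑(indLp (hs n) g) - ⇑(indLp (MeasurableSet.iUnion hs) g) : X → ℝ)
        =ᵐ[ν] -(d n).indicator g := by
      filter_upwards [coeFn_indLp (hs n) g, coeFn_indLp (MeasurableSet.iUnion hs) g]
        with x h1 h2
      rw [Pi.sub_apply, h1, h2, Pi.neg_apply]
      have hsub := Set.subset_iUnion s n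
      by_cases hx : x ∈ s n
      · simp [hd, hx, hsub hx]
      · by_cases hx' : x ∈ ⋃ k, s k <;> simp only [hd, Set.indicator, Set.mem_sdiff, hx, hx',
          not_false_eq_true, and_self, false_and, if_true, if_false] <;> simp
    rw [eLpNorm_congr_ae h1, eLpNorm_neg, eLpNorm_indicator_eq_eLpNorm_restrict (hdm n),
      eLpNorm_eq_lintegral_rpow_enorm_toReal hp0 hp2, hκ, withDensity_apply _ (hdm n)]
  simp_rw [key]
  have h := hκd.ennrpow_const (1 / p.toReal)
  rwa [ENNReal.zero_rpow_of_pos (by positivity)] at h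

/-- Exhaustion: among the measurable sets `S` with `1_S g ∈ R` there is one containing all others
up to null sets. -/
lemma exists_maximal_mem [SigmaFinite ν] [hp : Fact (1 ≤ p)] (hp2 : p ≠ ∞)
    (R : Submodule ℝ (Lp ℝ p ν)) (hR : IsClosed (R : Set (Lp ℝ p ν)))
    (hinv : ∀ (S : Set X) (hS : MeasurableSet S), ∀ f ∈ R, indLp hS f ∈ R) (g : Lp ℝ p ν) :
    ∃ (M : Set X) (hM : MeasurableSet M), indLp hM g ∈ R ∧
      ∀ (S : Set X) (hS : MeasurableSet S), Disjoint M S → indLp hS g ∈ R → ν S = 0 := by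
  set F : Set (Set X) := {S | ∃ hS : MeasurableSet S, indLp hS g ∈ R} with hF
  have hunion : ∀ A ∈ F, ∀ B ∈ F, A ∪ B ∈ F := by
    rintro A ⟨hA, hA'⟩ B ⟨hB, hB'⟩
    refine ⟨hA.union hB, ?_⟩
    have h1 : indLp (hB.diff hA) g ∈ R := by
      have := hinv Aᶜ hA.compl _ hB'
      rw [indLp_indLp] at this
      convert this using 3
      rw [Set.sdiff_eq, Set.inter_comm]
    have h2 := R.add_mem hA' h1
    rw [indLp_add_of_disjoint hA (hB.diff hA) Set.disjoint_sdiff_right] at h2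
    convert h2 using 3
    rw [Set.union_sdiff_self]
  have hempty : ∅ ∈ F :=
    ⟨MeasurableSet.empty, by
      rw [indLp_eq_zero_of_null _ measure_empty]; exact R.zero_mem⟩
  -- A finite measure with the same null sets, so that suprema of measures can be attained.
  set τ : Measure X := ν.toFinite with hτ
  obtain ⟨a, -, ha, haF⟩ := exists_seq_tendsto_sSup (S := τ '' F) ⟨_, _, hempty, rfl⟩
    (OrderTop.bddAbove _)
  choose b hbF hba using haF
  have hcF : ∀ n, Set.accumulate b n ∈ F := by
    intro n
    induction n with
    | zero => simpa using hbF 0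
    | succ n ih => rw [Set.accumulate_succ]; exact hunion _ ih _ (hbF _)
  have hM : MeasurableSet (⋃ n, Set.accumulate b n) := MeasurableSet.iUnion fun n => (hcF n).1
  have hMR : indLp hM g ∈ R :=
    hR.mem_of_tendsto (tendsto_indLp_iUnion hp2 _ (fun n => (hcF n).1) Set.monotone_accumulate g)
      (Eventually.of_forall fun n => (hcF n).2)
  have hMsup : sSup (τ '' F) ≤ τ (⋃ n, Set.accumulate b n) := by
    refine le_of_tendsto' ha fun n => ?_
    rw [← hba n]
    exact measure_mono (Set.subset_accumulate.trans (Set.subset_iUnion (Set.accumulate b) n))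
  refine ⟨_, hM, hMR, fun S hS hd hSR => ?_⟩
  have h1 : τ ((⋃ n, Set.accumulate b n) ∪ S) ≤ τ (⋃ n, Set.accumulate b n) :=
    (le_sSup (Set.mem_image_of_mem τ (hunion _ ⟨hM, hMR⟩ _ ⟨hS, hSR⟩))).trans hMsup
  rw [measure_union hd hS] at h1
  have h2 : τ S = 0 := by
    by_contra h
    exact absurd h1 (not_le.2 (ENNReal.lt_add_right (measure_ne_top _ _) h))
  exact absolutelyContinuous_toFinite ν h2

/-- A set of positive measure for a non-atomic measure contains infinitely many disjoint
measurable subsets of positive measure: they are the successive differences of a decreasing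
sequence of sets. -/
lemma exists_disjoint_pos_seq (hna : NonAtomicWrt m ν) {D : Set X} (hD : MeasurableSet D)
    (hpos : 0 < ν D) :
    ∃ s : ℕ → Set X, (∀ n, MeasurableSet (s n) ∧ s n ⊆ D ∧ 0 < ν (s n)) ∧
      Pairwise (Function.onFun Disjoint s) := by
  have step : ∀ A : {A : Set X // MeasurableSet A ∧ 0 < ν A},
      ∃ B : {A : Set X // MeasurableSet A ∧ 0 < ν A},
        B.1 ⊆ A.1 ∧ 0 < ν (A.1 \ B.1) := by
    rintro ⟨A, hA, hA0⟩
    obtain ⟨G, hG, hGA, hG0, hlt⟩ := hna A hA hA0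
    refine ⟨⟨G, hG, hG0⟩, hGA, ?_⟩
    rw [pos_iff_ne_zero]
    intro h
    exact absurd (measure_mono_ae (ae_le_set.2 h)) (not_le.2 hlt)
  choose f hf using step
  set t : ℕ → {A : Set X // MeasurableSet A ∧ 0 < ν A} := fun n => f^[n] ⟨D, hD, hpos⟩ with ht
  have hsucc : ∀ n, t (n + 1) = f (t n) := fun n => Function.iterate_succ_apply' _ _ _
  have hanti : Antitone fun n => (t n).1 :=
    antitone_nat_of_succ_le fun n => by rw [hsucc]; exact (hf _).1
  refine ⟨fun n => (t n).1 \ (t (n + 1)).1, fun n => ⟨(t n).2.1.diff (t (n + 1)).2.1,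
    Set.sdiff_subset.trans (hanti (Nat.zero_le n)), ?_⟩, ?_⟩
  · dsimp only
    rw [hsucc]
    exact (hf _).2
  · refine (pairwise_disjoint_on _).2 fun i j hij => ?_
    exact Set.disjoint_left.2 fun x hi hj => hi.2 (hanti hij hj.1)

/-- Over a non-atomic measure, a closed subspace of `L^p` of finite codimension which is stable
under multiplication by indicators is the whole space. -/
lemma eq_top_of_indicator_invariant [SigmaFinite ν] (hna : NonAtomicWrt m ν)
    [hp : Fact (1 ≤ p)] (hp2 : p ≠ ∞)
    (R : Submodule ℝ (Lp ℝ p ν)) (hR : IsClosed (R : Set (Lp ℝ p ν)))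
    (hinv : ∀ (S : Set X) (hS : MeasurableSet S), ∀ f ∈ R, indLp hS f ∈ R)
    [FiniteDimensional ℝ (Lp ℝ p ν ⧸ R)] : R = ⊤ := by
  rw [Submodule.eq_top_iff']
  intro g
  by_contra hg
  obtain ⟨M, hM, hMR, hmax⟩ := exists_maximal_mem hp2 R hR hinv g
  have hMc : 0 < ν Mᶜ := by
    rw [pos_iff_ne_zero]
    intro h0
    apply hg
    have h := indLp_add_of_disjoint hM hM.compl disjoint_compl_right g
    rw [indLp_eq_zero_of_null hM.compl h0, add_zero] at h
    have h' : indLp (hM.union hM.compl) g = g := by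
      simpa only [Set.union_compl_self] using indLp_univ g
    rwa [← h', ← h]
  obtain ⟨s, hs, hdisj⟩ := exists_disjoint_pos_seq hna hM.compl hMc
  have hlin : LinearIndependent ℝ fun n => R.mkQ (indLp (hs n).1 g) := by
    rw [linearIndependent_iff']
    intro I c hc j hj
    simp_rw [← R.mkQ.map_smul, ← map_sum] at hc
    rw [Submodule.mkQ_apply, Submodule.Quotient.mk_eq_zero] at hc
    have h1 := hinv _ (hs j).1 _ hc
    rw [map_sum, Finset.sum_eq_single_of_mem j hj] at h1
    · by_contra hcj
      rw [(indLp (hs j).1).map_smul, R.smul_mem_iff hcj, indLp_indLp] at h1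
      simp only [Set.inter_self] at h1
      exact (hs j).2.2.ne' (hmax _ (hs j).1
        (disjoint_compl_right.mono_right (hs j).2.1) h1)
    · intro i _ hij
      rw [(indLp (hs j).1).map_smul, indLp_indLp, indLp_eq_zero_of_null, smul_zero]
      rw [(hdisj hij.symm).inter_eq, measure_empty]
  exact not_finite_iff_infinite.2 inferInstance hlin.finite_of_isNoetherian

end IndicatorInvariant

/-- Let `(X, Σ, μ)` be non-atomic (with `μ|𝒜` non-atomic) and
`T = EM_u : L^p(Σ) → L^p(𝒜)` bounded, `1 < p < ∞`. If `T` has closed range and the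
cokernel of `T` is finite dimensional, then `T` is surjective. -/
theorem condexp_mult_closed_range_finite_codim_surjective
    {X : Type*} {mX : MeasurableSpace X} (μ : Measure X) [SigmaFinite μ]
    (m : MeasurableSpace X) (hm : m ≤ mX) [SigmaFinite (μ.trim hm)]
    (hna : NonAtomicWrt mX μ) (hnaA : NonAtomicWrt m μ)
    (p : ℝ≥0∞) (hp1 : 1 < p) (hp2 : p ≠ ∞) [Fact (1 ≤ p)]
    (u : X → ℝ) (hu : Measurable u)
    (T : Lp ℝ p μ →L[ℝ] Lp ℝ p (μ.trim hm))
    (hT : ∀ f : Lp ℝ p μ, (T f : X → ℝ) =ᵐ[μ] μ[fun x => u x * f x | m])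
    (hclosed : IsClosed (Set.range T))
    (hcodim : FiniteDimensional ℝ
      (Lp ℝ p (μ.trim hm) ⧸ LinearMap.range (T : Lp ℝ p μ →ₗ[ℝ] Lp ℝ p (μ.trim hm)))) :
    Function.Surjective T := by
  have hnat : @NonAtomicWrt X m m (μ.trim hm) := by
    intro F hF hF0
    rw [trim_measurableSet_eq hm hF] at hF0
    obtain ⟨G, hG, hGF, hG0, hlt⟩ := hnaA F hF hF0
    refine ⟨G, hG, hGF, ?_, ?_⟩
    · rwa [trim_measurableSet_eq hm hG]
    · rwa [trim_measurableSet_eq hm hG, trim_measurableSet_eq hm hF]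
  have htop := eq_top_of_indicator_invariant hnat hp2
    (LinearMap.range (T : Lp ℝ p μ →ₗ[ℝ] Lp ℝ p (μ.trim hm)))
    (by rwa [LinearMap.coe_range]) ?_
  · exact LinearMap.range_eq_top.1 htop
  rintro S hS _ ⟨f, rfl⟩
  by_cases hint : Integrable (fun x => u x * f x) μ
  · refine ⟨indLp (hm S hS) f, Lp.ext ?_⟩
    refine (StronglyMeasurable.ae_eq_trim_iff hm (Lp.stronglyMeasurable _)
      (Lp.stronglyMeasurable _)).2 ?_
    have h1 := ae_eq_of_ae_eq_trim (coeFn_indLp hS (T f))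
    have h2 : (fun x => u x * (indLp (hm S hS) f : X → ℝ) x)
        =ᵐ[μ] S.indicator fun x => u x * f x := by
      filter_upwards [coeFn_indLp (hm S hS) f] with x hx
      by_cases h : x ∈ S <;> simp [h, hx]
    filter_upwards [hT (indLp (hm S hS) f), h1, hT f, condExp_congr_ae (m := m) h2,
      condExp_indicator hint hS] with x e1 e2 e3 e4 e5
    refine (e1.trans (e4.trans e5)).trans (Eq.trans ?_ e2.symm)
    by_cases h : x ∈ S <;> simp [h, e3]
  -- The conditional expectation of a non-integrable function is `0` by convention.
  · have h0 : T f = 0 := by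
      apply Lp.ext
      refine (StronglyMeasurable.ae_eq_trim_iff hm (Lp.stronglyMeasurable _)
        (Lp.stronglyMeasurable _)).2 ?_
      have h1 := hT f
      rw [condExp_of_not_integrable hint] at h1
      exact h1.trans (ae_eq_of_ae_eq_trim (Lp.coeFn_zero ℝ p (μ.trim hm))).symm
    refine ⟨0, ?_⟩
    simp [h0]
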